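/- Let P be a uniformly distributed projection in Proj_𝔽(n,2n) and let X, Y ∈ Proj_𝔽(1,2n). Then the probability that P separates X and Y satisfies P(φ_P(X) ≠ φ_P(Y)) ≤ ‖X − Y‖. -/

import Mathlib

/-!
Only the invariance of the law of `P` under conjugation by a one-parameter group of plane rotations
is used. Let `p = tr (X Y) = cos² θ`, with `θ` the angle between the ranges of `X` and `Y`. Since
`X` and `Y` have rank one, `X Y X = p X` and `Y X Y = p Y`, and `Q = (X - Y)² / (1 - p)` and
`K = (Y X - X Y) / (cos θ sin θ)` are the projection onto the plane spanned by the ranges and the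
rotation by `π/2` in it; defining the rotations through `X` and `Y` avoids choosing phases for
spanning vectors. Rotating by `t/2` in that plane carries `X` to `A + cos t B + sin t C` and `Y` to
`A + cos (t + 2θ) B + sin (t + 2θ) C` (`exists_rotation`).

Hence, for fixed `P`, the rotated pair is separated by `P` exactly when a function
`a + b cos t + c sin t` lies on different sides of `1/2` at `t` and `t + 2θ`. This function exceeds
`1/2` on an arc, so the bad `t` have measure at most `4θ` in a period `2π`
(`volume_sign_change_le`). Averaging over `t` bounds the probability by `2θ/π` (`sep_trig_bound`),
and `2θ/π ≤ sin θ = √(1 - p) ≤ ‖X - Y‖` by Jordan's inequality and `(X - Y)² X = (1 - p) X`.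
-/

open MeasureTheory ProbabilityTheory Matrix
open scoped ComplexOrder

noncomputable section

attribute [local instance] Classical.propDecidable

variable {𝕜 : Type} [RCLike 𝕜]

/-- The measurable space structure on matrices (entrywise). -/
instance matrixMeasurableSpace {d : ℕ} : MeasurableSpace (Matrix (Fin d) (Fin d) 𝕜) :=
  inferInstanceAs (MeasurableSpace (Fin d → Fin d → 𝕜))

/-- `β = 1/2` for `𝔽 = ℝ` and `β = 1` for `𝔽 = ℂ`. -/
def fieldBeta (𝕜 : Type) [RCLike 𝕜] : ℝ := (Module.finrank ℝ 𝕜 : ℝ) / 2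

/-- `P` is an orthogonal projection of rank `k`. -/
def IsProjOfRank {d : ℕ} (k : ℕ) (P : Matrix (Fin d) (Fin d) 𝕜) : Prop :=
  P.IsHermitian ∧ P * P = P ∧ P.rank = k

/-- `ν` is the uniform (rotation invariant) probability distribution on the set of
rank-`k` orthogonal projections on `𝔽^d`. -/
def IsUniformProj {d : ℕ} (k : ℕ) (ν : Measure (Matrix (Fin d) (Fin d) 𝕜)) : Prop :=
  IsProbabilityMeasure ν ∧ (∀ᵐ P ∂ν, IsProjOfRank k P) ∧
    ∀ U ∈ Matrix.unitaryGroup (Fin d) 𝕜,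
      ν.map (fun P => U * P * star U) = ν

/-- The real number `tr (P X)`. -/
def traceInner {d : ℕ} (P X : Matrix (Fin d) (Fin d) 𝕜) : ℝ := RCLike.re (P * X).trace

/-- The proximally flipped projection `P̂(X)`. -/
def flipProj {d : ℕ} (P X : Matrix (Fin d) (Fin d) 𝕜) : Matrix (Fin d) (Fin d) 𝕜 :=
  if (1:ℝ)/2 ≤ traceInner P X then P else 1 - P

/-- The empirical average `Q̂_𝒫(X)` of the proximally flipped projections. -/
def Qhat {d m : ℕ} (P : Fin m → Matrix (Fin d) (Fin d) 𝕜)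
    (X : Matrix (Fin d) (Fin d) 𝕜) : Matrix (Fin d) (Fin d) 𝕜 :=
  ((m : 𝕜)⁻¹) • ∑ j, flipProj (P j) X

/-- Entrywise expectation of a random matrix. -/
def matExp {Ω : Type} [MeasurableSpace Ω] (μ : Measure Ω) {d : ℕ}
    (f : Ω → Matrix (Fin d) (Fin d) 𝕜) : Matrix (Fin d) (Fin d) 𝕜 :=
  Matrix.of fun i j => ∫ ω, f ω i j ∂μ

/-- The Euler Beta function. -/
def eulerBeta (a b : ℝ) : ℝ := ∫ t in (0:ℝ)..1, t ^ (a - 1) * (1 - t) ^ (b - 1)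

def mu1R (b : ℝ) (n : ℕ) : ℝ :=
  1/2 + 1 / (b * n * (4:ℝ) ^ (b * n) * eulerBeta (b * n) (b * n))

def mu2R (b : ℝ) (n : ℕ) : ℝ :=
  1/2 - 1 / (b * n * (2 * n - 1) * (4:ℝ) ^ (b * n) * eulerBeta (b * n) (b * n))

def mu1 (𝕜 : Type) [RCLike 𝕜] (n : ℕ) : ℝ := mu1R (fieldBeta 𝕜) n

def mu2 (𝕜 : Type) [RCLike 𝕜] (n : ℕ) : ℝ := mu2R (fieldBeta 𝕜) n

/-- The operator norm (ℓ² → ℓ²) of a matrix. -/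
def opNorm {d : ℕ} (A : Matrix (Fin d) (Fin d) 𝕜) : ℝ :=
  ‖Matrix.toEuclideanCLM (𝕜 := 𝕜) A‖

/-- `Xhat` is a solution of the principal eigenspace program for the matrix `M`:
a rank-one orthogonal projection maximizing `Y ↦ tr (M Y)` over all positive semidefinite
`Y` with `tr Y ≤ 1`. -/
def IsPEP {d : ℕ} (M Xhat : Matrix (Fin d) (Fin d) 𝕜) : Prop :=
  IsProjOfRank 1 Xhat ∧
    ∀ Y : Matrix (Fin d) (Fin d) 𝕜, Y.PosSemidef → RCLike.re Y.trace ≤ 1 →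
      RCLike.re (M * Y).trace ≤ RCLike.re (M * Xhat).trace

/-- The binary question `φ_P` with strict threshold. -/
def phiGT {d : ℕ} (P X : Matrix (Fin d) (Fin d) 𝕜) : Bool := (1:ℝ)/2 < traceInner P X

/-- The binary question `φ_P` with non-strict threshold. -/
def phiGE {d : ℕ} (P X : Matrix (Fin d) (Fin d) 𝕜) : Bool := (1:ℝ)/2 ≤ traceInner P X

/-- The normalized measurement Hamming distance `d_𝒫(X,Y)`. -/
def hamDist {d m : ℕ} (P : Fin m → Matrix (Fin d) (Fin d) 𝕜)
    (X Y : Matrix (Fin d) (Fin d) 𝕜) : ℝ :=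
  (m:ℝ)⁻¹ * ∑ j, if phiGT (P j) X ≠ phiGT (P j) Y then 1 else 0

/-- `P` `t`-separates `X` and `Y`. -/
def softSep {d : ℕ} (t : ℝ) (X Y P : Matrix (Fin d) (Fin d) 𝕜) : Prop :=
  (traceInner P X + t < 1/2 ∧ 1/2 ≤ traceInner P Y - t) ∨
  (traceInner P Y + t < 1/2 ∧ 1/2 ≤ traceInner P X - t)

/-- The `t`-soft Hamming distance `d^t_𝒫(X,Y)`. -/
def softHam {d m : ℕ} (t : ℝ) (P : Fin m → Matrix (Fin d) (Fin d) 𝕜)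
    (X Y : Matrix (Fin d) (Fin d) 𝕜) : ℝ :=
  (m:ℝ)⁻¹ * ∑ j, if softSep t X Y (P j) then 1 else 0

/-- The faulty empirical average built from the bit vector `b`. -/
def Qtilde {d m : ℕ} (P : Fin m → Matrix (Fin d) (Fin d) 𝕜) (b : Fin m → Bool) :
    Matrix (Fin d) (Fin d) 𝕜 :=
  ((m : 𝕜)⁻¹) • ∑ j, (if b j then P j else 1 - P j)

/-- Normalized Hamming distance between bit vectors. -/
def bitHamDist {m : ℕ} (a b : Fin m → Bool) : ℝ :=
  (m:ℝ)⁻¹ * ∑ j, if a j ≠ b j then 1 else 0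

/-! ### Rotations in a plane -/

/-- If `Q` is the projection onto a plane and `K` the rotation by `π/2` in it, the elements
`1 - Q + a Q + b K` multiply like the complex numbers `a + b i`. -/
theorem rot_mul {A : Type*} [Ring A] [Algebra ℝ A] {Q K : A}
    (QQ : Q * Q = Q) (QK : Q * K = K) (KQ : K * Q = K) (KK : K * K = -Q) (a b c d : ℝ) :
    (1 - Q + a • Q + b • K) * (1 - Q + c • Q + d • K)
      = 1 - Q + (a * c - b * d) • Q + (a * d + b * c) • K := by
  simp only [mul_add, add_mul, mul_sub, sub_mul, mul_one, one_mul, smul_mul_assoc,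
    mul_smul_comm, QQ, QK, KQ, KK]
  module

theorem rot_conj {A : Type*} [Ring A] [Algebra ℝ A] {X Q K : A}
    (QX : Q * X = X) (XQ : X * Q = X) (KXK : K * X * K = X - Q) (a b : ℝ) :
    (1 - Q + a • Q + b • K) * X * (1 - Q + a • Q + (-b) • K)
      = (a ^ 2) • X + (b ^ 2) • (Q - X) + (a * b) • (K * X - X * K) := by
  have KXQ : K * X * Q = K * X := by rw [mul_assoc, XQ]
  simp only [mul_add, add_mul, mul_sub, sub_mul, mul_one, one_mul, smul_mul_assoc,
    mul_smul_comm, QX, XQ, KXK, KXQ]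
  module

/-- Two idempotents with `XYX = pX` and `YXY = pY` behave like rank-one projections at angle
`θ`, `p = cos² θ`: `Q` is the projection onto their joint range, `K` (with
`k = 1 / (cos θ sin θ)`) is the rotation by `π/2` there, and the last identity, read through
`rot_conj`, says that `Y` is `X` rotated by `θ`. -/
theorem pair_alg {A : Type*} [Ring A] [Algebra ℝ A] {X Y : A} {p k : ℝ} (hp1 : p < 1)
    (hk : k ^ 2 * (p * (1 - p)) = 1)
    (XX : X * X = X) (YY : Y * Y = Y) (XYX : X * Y * X = p • X) (YXY : Y * X * Y = p • Y) :
    ∀ Q K : A, Q = (1 - p)⁻¹ • (X + Y - X * Y - Y * X) → K = k • (Y * X - X * Y) →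
    Q * Q = Q ∧ Q * K = K ∧ K * Q = K ∧ K * K = -Q ∧ Q * X = X ∧ X * Q = X ∧
    K * X * K = X - Q ∧
    Y = p • X + (1 - p) • (Q - X) + (p * (1 - p) * k) • (K * X - X * K) := by
  rintro Q K rfl rfl
  have hq : 1 - p ≠ 0 := by linarith
  have r1 : ∀ Z, X * (X * Z) = X * Z := fun Z => by rw [← mul_assoc, XX]
  have r2 : ∀ Z, Y * (Y * Z) = Y * Z := fun Z => by rw [← mul_assoc, YY]
  rw [mul_assoc] at XYX YXY
  refine ⟨?_, ?_, ?_, ?_, ?_, ?_, ?_, ?_⟩ <;>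
  · simp only [mul_add, add_mul, mul_sub, sub_mul, smul_mul_assoc, mul_smul_comm, smul_add,
      smul_sub, mul_assoc, XX, YY, XYX, YXY, r1, r2]
    match_scalars <;> field_simp <;> first
      | ring1 | linear_combination hk | linear_combination -hk | linear_combination p * hk
      | linear_combination -p * hk | linear_combination 2 * p * hk

/-- The half-angle rotations `U t = 1 - Q + cos (t/2) Q + sin (t/2) K` in the joint range of `X`
and `Y` move both along one circle of matrices, with `Y` ahead of `X` by twice the angle
`arccos √p` between their ranges. -/
theorem exists_rotation {d : ℕ} {X Y : Matrix (Fin d) (Fin d) 𝕜} {p : ℝ} (hp0 : 0 < p)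
    (hp1 : p < 1) (hX : X.IsHermitian) (hY : Y.IsHermitian)
    (XX : X * X = X) (YY : Y * Y = Y) (XYX : X * Y * X = p • X) (YXY : Y * X * Y = p • Y) :
    ∃ (U : ℝ → Matrix (Fin d) (Fin d) 𝕜) (A B C : Matrix (Fin d) (Fin d) 𝕜),
      (∀ t, U t ∈ Matrix.unitaryGroup (Fin d) 𝕜) ∧
      (∀ t, U t * X * star (U t) = A + Real.cos t • B + Real.sin t • C) ∧
      (∀ t, U t * Y * star (U t) = A + Real.cos (t + 2 * Real.arccos √p) • B
        + Real.sin (t + 2 * Real.arccos √p) • C) := by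
  have h1p : 0 < 1 - p := by linarith
  set k : ℝ := (√p * √(1 - p))⁻¹ with hkdef
  have hk : k ^ 2 * (p * (1 - p)) = 1 := by
    rw [hkdef, inv_pow, mul_pow, Real.sq_sqrt hp0.le, Real.sq_sqrt h1p.le]
    exact inv_mul_cancel₀ (by positivity)
  have hk' : p * (1 - p) * k = √p * √(1 - p) := by
    rw [hkdef, ← div_eq_mul_inv, div_eq_iff (by positivity), mul_mul_mul_comm,
      Real.mul_self_sqrt hp0.le, Real.mul_self_sqrt h1p.le]
  obtain ⟨Q, hQ⟩ : ∃ Q, Q = (1 - p)⁻¹ • (X + Y - X * Y - Y * X) := ⟨_, rfl⟩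
  obtain ⟨K, hK⟩ : ∃ K, K = k • (Y * X - X * Y) := ⟨_, rfl⟩
  obtain ⟨QQ, QK, KQ, KK, QX, XQ, KXK, hYeq⟩ := pair_alg hp1 hk XX YY XYX YXY Q K hQ hK
  have sX : star X = X := hX
  have sY : star Y = Y := hY
  have sQ : star Q = Q := by
    rw [hQ]; simp only [star_smul, star_add, star_sub, star_mul, sX, sY, star_trivial]
    congr 1; abel
  have sK : star K = -K := by
    rw [hK]; simp only [star_smul, star_sub, star_mul, sX, sY, star_trivial]
    module
  set U : ℝ → Matrix (Fin d) (Fin d) 𝕜 := fun t =>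
    1 - Q + Real.cos (t / 2) • Q + Real.sin (t / 2) • K with hU
  have sU : ∀ t, star (U t) = 1 - Q + Real.cos (t / 2) • Q + (-Real.sin (t / 2)) • K := by
    intro t
    simp only [hU, star_add, star_sub, star_one, star_smul, sQ, sK, star_trivial]
    module
  have Umul : ∀ s t, U s * U t = U (s + t) := by
    intro s t
    simp only [hU, rot_mul QQ QK KQ KK, add_div, Real.cos_add, Real.sin_add]
    congr 2; ring
  have hconj : ∀ t, U t * X * star (U t) =
      (1 / 2 : ℝ) • Q + Real.cos t • (X - (1 / 2 : ℝ) • Q)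
        + Real.sin t • ((1 / 2 : ℝ) • (K * X - X * K)) := by
    intro t
    rw [sU, hU, rot_conj QX XQ KXK]
    have e1 : Real.cos t = 2 * Real.cos (t / 2) ^ 2 - 1 := by
      rw [← Real.cos_two_mul]; congr 1; ring
    have e2 : Real.sin t = 2 * Real.sin (t / 2) * Real.cos (t / 2) := by
      rw [← Real.sin_two_mul]; congr 1; ring
    rw [e1, e2, Real.sin_sq]
    module
  have hYU : U (2 * Real.arccos √p) * X * star (U (2 * Real.arccos √p)) = Y := by
    have hc : Real.cos (Real.arccos √p) = √p :=
      Real.cos_arccos (by linarith [Real.sqrt_nonneg p]) (Real.sqrt_le_one.mpr hp1.le)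
    rw [sU, hU, rot_conj QX XQ KXK, mul_div_cancel_left₀ _ (two_ne_zero), hc, Real.sin_arccos,
      Real.sq_sqrt hp0.le, Real.sq_sqrt h1p.le, ← hk', ← hYeq]
  refine ⟨U, _, _, _, fun t => ?_, hconj, fun t => ?_⟩
  · rw [Matrix.mem_unitaryGroup_iff, sU, hU, rot_mul QQ QK KQ KK]
    have : Real.cos (t / 2) * Real.cos (t / 2) - Real.sin (t / 2) * -Real.sin (t / 2) = 1 := by
      linear_combination Real.sin_sq_add_cos_sq (t / 2)
    rw [this]
    module
  · rw [← hconj, ← Umul, star_mul]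
    conv_lhs => rw [← hYU]
    simp only [mul_assoc]

/-! ### Separation on a circle -/

/-- Over one period, `t ↦ a + b cos t + c sin t` lies on different sides of the threshold `1/2`
at `t` and at `t + δ` only on a set of measure at most `2 δ`: it exceeds the threshold on a single
arc, and such a `t` lies within `δ` before one of the two endpoints of that arc. -/
theorem volume_sign_change_le (a b c δ : ℝ) (hδ : 0 ≤ δ) :
    volume ({t : ℝ | ¬ (1/2 < a + Real.cos t * b + Real.sin t * c ↔
      1/2 < a + Real.cos (t+δ) * b + Real.sin (t+δ) * c)} ∩ Set.Ioc 0 (0 + 2 * Real.pi))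
      ≤ ENNReal.ofReal (2*δ) := by
  obtain ⟨r, t₀, hr, hb, hc⟩ : ∃ r t₀ : ℝ, 0 ≤ r ∧ b = r * Real.cos t₀ ∧ c = r * Real.sin t₀ :=
    ⟨‖(⟨b, c⟩ : ℂ)‖, Complex.arg ⟨b, c⟩, norm_nonneg _,
      (Complex.norm_mul_cos_arg ⟨b, c⟩).symm, (Complex.norm_mul_sin_arg ⟨b, c⟩).symm⟩
  have hf : ∀ t, a + Real.cos t * b + Real.sin t * c = a + r * Real.cos (t - t₀) := by
    intro t; rw [Real.cos_sub, hb, hc]; ring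
  simp only [hf]
  set g : ℝ → Prop := fun t => 1/2 < a + r * Real.cos t with hg
  change volume ({t : ℝ | ¬ (g (t - t₀) ↔ g (t + δ - t₀))} ∩ _) ≤ _
  -- unless it is the whole line, the set where `g` holds is the arc `(-α, α)` modulo `2π`
  by_cases hall : ∀ t, g t
  · simp [hall]
  obtain ⟨α, h0, hπ, hin, hout⟩ : ∃ α : ℝ, 0 ≤ α ∧ α ≤ Real.pi ∧
      (∀ s, -α < s → s < α → g s) ∧ (∀ s, α ≤ s → s ≤ 2 * Real.pi - α → ¬ g s) := by
    by_cases hnone : ∀ t, ¬ g t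
    · exact ⟨0, le_rfl, Real.pi_pos.le, fun s h1 h2 => by linarith, fun s _ _ => hnone s⟩
    push Not at hall hnone
    obtain ⟨s₁, h1⟩ := hall
    obtain ⟨s₂, h2⟩ := hnone
    simp only [hg, not_lt] at h1 h2
    have hr0 : 0 < r := by
      rcases hr.eq_or_lt with h | h
      · subst h; linarith
      · exact h
    have hk : ∀ s, g s ↔ (1/2 - a) / r < Real.cos s := by
      intro s; rw [div_lt_iff₀ hr0]; simp only [hg]; constructor <;> intro h <;> linarith
    set k := (1/2 - a) / r with hkdef
    have k1 : k ≤ 1 := by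
      rw [hkdef, div_le_one hr0]; nlinarith [Real.cos_le_one s₂]
    have k2 : -1 ≤ k := by
      rw [hkdef, le_div_iff₀ hr0]; nlinarith [Real.neg_one_le_cos s₁]
    refine ⟨Real.arccos k, Real.arccos_nonneg _, Real.arccos_le_pi _, ?_, ?_⟩
    · intro s h1 h2
      rw [hk, ← Real.cos_abs s]
      calc k = Real.cos (Real.arccos k) := (Real.cos_arccos k2 k1).symm
        _ < _ := Real.cos_lt_cos_of_nonneg_of_le_pi (abs_nonneg _) (Real.arccos_le_pi _)
          (abs_lt.mpr ⟨h1, h2⟩)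
    · intro s h1 h2
      rw [hk, not_lt]
      calc Real.cos s ≤ Real.cos (Real.arccos k) := by
            rcases le_total s Real.pi with h | h
            · exact Real.cos_le_cos_of_nonneg_of_le_pi (Real.arccos_nonneg _) h h1
            · rw [← Real.cos_two_pi_sub s]
              exact Real.cos_le_cos_of_nonneg_of_le_pi (Real.arccos_nonneg _)
                (by linarith) (by linarith)
        _ = k := Real.cos_arccos k2 k1
  -- start the period at the left endpoint of the arc, so that neither piece wraps around
  have hshift := (isAddFundamentalDomain_Ioc (T := 2 * Real.pi) Real.two_pi_pos 0
    volume).measure_set_eq (isAddFundamentalDomain_Ioc (T := 2 * Real.pi) Real.two_pi_pos (t₀ - α) volume)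
    (A := {t : ℝ | ¬ (g (t - t₀) ↔ g (t + δ - t₀))}) (by
      simp only [hg]; measurability) (by
      rintro ⟨z, hz⟩
      obtain ⟨m, rfl⟩ := AddSubgroup.mem_zmultiples_iff.mp hz
      ext t
      have e : ∀ u v : ℝ, Real.cos (m • (2 * Real.pi) + u + v - t₀) = Real.cos (u + v - t₀) := by
        intro u v
        rw [← Real.cos_add_int_mul_two_pi (u + v - t₀) m]; congr 1; simp; ring
      have e1 := e t 0
      simp only [add_zero] at e1
      simp only [hg, Set.mem_preimage, Set.mem_ofPred_eq, AddSubgroup.vadd_def, vadd_eq_add, e, e1])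
  rw [hshift]
  calc _ ≤ volume (Set.Icc (t₀ + α - δ) (t₀ + α) ∪
        Set.Icc (t₀ + 2 * Real.pi - α - δ) (t₀ + 2 * Real.pi - α)) := by
        apply measure_mono
        rintro t ⟨ht, h1, h2⟩
        simp only [Set.mem_ofPred_eq] at ht
        simp only [Set.mem_union, Set.mem_Icc]
        by_cases hs : t - t₀ < α
        · left
          refine ⟨?_, by linarith⟩
          by_contra hcon
          exact ht (iff_of_true (hin _ (by linarith) hs) (hin _ (by linarith) (by linarith)))
        · right
          refine ⟨?_, by linarith⟩
          by_contra hcon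
          exact ht (iff_of_false (hout _ (by linarith) (by linarith))
            (hout _ (by linarith) (by linarith)))
    _ ≤ _ := (measure_union_le _ _).trans (by
        rw [Real.volume_Icc, Real.volume_Icc, ← ENNReal.ofReal_add (by linarith) (by linarith)]
        apply ENNReal.ofReal_le_ofReal; linarith)

/-- If a family of unitaries moves the pair `(X, Y)` along a circle of matrices, `Y` being `δ`
ahead of `X`, then an invariant random `P` separates `X` and `Y` with probability at most `δ / π`:
by invariance the probability equals its average over the circle, and for each fixed `P` the
parameters `t` at which the moved pair is separated have measure at most `2 δ` out of `2 π`. -/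
theorem sep_trig_bound {d : ℕ} {ν : Measure (Matrix (Fin d) (Fin d) 𝕜)} [IsProbabilityMeasure ν]
    (hν : ∀ U ∈ Matrix.unitaryGroup (Fin d) 𝕜, ν.map (fun P => U * P * star U) = ν)
    {X Y A B C : Matrix (Fin d) (Fin d) 𝕜} {U : ℝ → Matrix (Fin d) (Fin d) 𝕜} {δ : ℝ} (hδ : 0 ≤ δ)
    (hU : ∀ t, U t ∈ Matrix.unitaryGroup (Fin d) 𝕜)
    (hX : ∀ t, U t * X * star (U t) = A + Real.cos t • B + Real.sin t • C)
    (hY : ∀ t, U t * Y * star (U t) = A + Real.cos (t + δ) • B + Real.sin (t + δ) • C) :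
    (ν {P | phiGT P X ≠ phiGT P Y}).toReal ≤ δ / Real.pi := by
  set S := {P : Matrix (Fin d) (Fin d) 𝕜 | phiGT P X ≠ phiGT P Y} with hS
  have hSiff : ∀ P, P ∈ S ↔ ¬ (1 / 2 < traceInner P X ↔ 1 / 2 < traceInner P Y) := by
    intro P
    simp [hS, phiGT, decide_eq_decide]
  have hentry : ∀ i j, Measurable fun P : Matrix (Fin d) (Fin d) 𝕜 => P i j := fun i j =>
    (measurable_pi_apply j).comp (measurable_pi_apply i)
  have htr : ∀ Z : Matrix (Fin d) (Fin d) 𝕜, Measurable fun P => traceInner P Z := by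
    intro Z
    unfold traceInner
    simp only [Matrix.trace, Matrix.diag, Matrix.mul_apply]
    exact RCLike.measurable_re.comp <| Finset.measurable_sum _ fun i _ =>
      Finset.measurable_sum _ fun j _ => (hentry i j).mul_const _
  have hconj : ∀ V W : Matrix (Fin d) (Fin d) 𝕜, Measurable fun P => V * P * W := by
    intro V W
    refine measurable_pi_lambda _ fun i => measurable_pi_lambda _ fun j => ?_
    simp only [Matrix.mul_apply]
    exact Finset.measurable_sum _ fun k _ => (Finset.measurable_sum _ fun l _ =>
      (hentry l k).const_mul _).mul_const _
  have hSm : MeasurableSet S := by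
    have : S = {P | ¬ (1 / 2 < traceInner P X ↔ 1 / 2 < traceInner P Y)} := Set.ext hSiff
    rw [this]
    exact ((measurableSet_lt measurable_const (htr X)).iff
      (measurableSet_lt measurable_const (htr Y))).compl
  set T : Set (ℝ × Matrix (Fin d) (Fin d) 𝕜) := {q | ¬ (
    1 / 2 < traceInner q.2 A + Real.cos q.1 * traceInner q.2 B + Real.sin q.1 * traceInner q.2 C ↔
    1 / 2 < traceInner q.2 A + Real.cos (q.1 + δ) * traceInner q.2 B
      + Real.sin (q.1 + δ) * traceInner q.2 C)} with hT
  have hTm : MeasurableSet T := by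
    have hA : Measurable fun q : ℝ × Matrix (Fin d) (Fin d) 𝕜 => traceInner q.2 A :=
      (htr A).comp measurable_snd
    have hB : Measurable fun q : ℝ × Matrix (Fin d) (Fin d) 𝕜 => traceInner q.2 B :=
      (htr B).comp measurable_snd
    have hC : Measurable fun q : ℝ × Matrix (Fin d) (Fin d) 𝕜 => traceInner q.2 C :=
      (htr C).comp measurable_snd
    refine ((measurableSet_lt measurable_const ?_).iff (measurableSet_lt measurable_const ?_)).compl
      <;> fun_prop
  have htri : ∀ (P : Matrix (Fin d) (Fin d) 𝕜) (a b : ℝ), traceInner P (A + a • B + b • C) =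
      traceInner P A + a * traceInner P B + b * traceInner P C := by
    intro P a b
    simp [traceInner, mul_add, Matrix.trace_add, Matrix.trace_smul, RCLike.smul_re]
  -- rotating `P` by `(U t)⁻¹` has the same effect as rotating both `X` and `Y` by `U t`
  have hslice : ∀ t, ν (Prod.mk t ⁻¹' T) = ν S := by
    intro t
    have hcyc : ∀ P Z : Matrix (Fin d) (Fin d) 𝕜,
        traceInner (star (U t) * P * U t) Z = traceInner P (U t * Z * star (U t)) := by
      intro P Z
      unfold traceInner
      rw [mul_assoc, mul_assoc, Matrix.trace_mul_comm]
      simp only [mul_assoc]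
    conv_rhs => rw [← hν (star (U t)) (Unitary.star_mem (hU t)),
      Measure.map_apply (hconj _ _) hSm]
    congr 1
    ext P
    rw [Set.mem_preimage, Set.mem_preimage, hSiff, star_star, hcyc, hcyc, hX, hY, htri, htri]
    rfl
  set I : Set ℝ := Set.Ioc 0 (0 + 2 * Real.pi) with hI
  have hvol : volume I = ENNReal.ofReal (2 * Real.pi) := by rw [hI, Real.volume_Ioc]; simp
  have h1 : ((volume.restrict I).prod ν) T = ν S * ENNReal.ofReal (2 * Real.pi) := by
    rw [Measure.prod_apply hTm]
    simp [hslice, hvol]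
  have h2 : ((volume.restrict I).prod ν) T ≤ ENNReal.ofReal (2 * δ) := by
    rw [Measure.prod_apply_symm hTm]
    calc _ ≤ ∫⁻ _, ENNReal.ofReal (2 * δ) ∂ν := by
          refine lintegral_mono fun P => ?_
          rw [Measure.restrict_apply (measurable_prodMk_right hTm)]
          exact volume_sign_change_le (traceInner P A) (traceInner P B) (traceInner P C) δ hδ
      _ = _ := by simp
  rw [h1] at h2
  have h3 := ENNReal.toReal_mono ENNReal.ofReal_ne_top h2
  rw [ENNReal.toReal_mul, ENNReal.toReal_ofReal (by positivity),
    ENNReal.toReal_ofReal (by positivity)] at h3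
  rw [le_div_iff₀ Real.pi_pos]
  linarith

/-! ### Rank-one projections -/

theorem rank_one_sandwich {d : ℕ} {X : Matrix (Fin d) (Fin d) 𝕜}
    (h : X.rank = 1) (Y : Matrix (Fin d) (Fin d) 𝕜) : X * Y * X = (X * Y).trace • X := by
  obtain ⟨u, v, rfl⟩ : ∃ u v, X = vecMulVec u v := by
    rw [Matrix.rank] at h
    obtain ⟨u, hu⟩ := finrank_le_one_iff.mp h.le
    choose c hc using fun j => hu ⟨X.mulVecLin (Pi.single j 1), LinearMap.mem_range_self _ _⟩
    refine ⟨u, c, ?_⟩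
    ext i j
    have := congrFun (congrArg Subtype.val (hc j)) i
    simp at this
    simp [vecMulVec_apply, ← this, mul_comm]
  rw [vecMulVec_mul, vecMulVec_mul_vecMulVec, trace_vecMulVec, vecMulVec_smul, dotProduct_comm]

theorem statement17 (n : ℕ)
    (ν : Measure (Matrix (Fin (2*n)) (Fin (2*n)) 𝕜)) (hν : IsUniformProj n ν)
    (X Y : Matrix (Fin (2*n)) (Fin (2*n)) 𝕜)
    (hX : IsProjOfRank 1 X) (hY : IsProjOfRank 1 Y) :
    (ν {P | phiGT P X ≠ phiGT P Y}).toReal ≤ opNorm (X - Y) := by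
  obtain ⟨hprob, -, hinv⟩ := hν
  obtain ⟨hXh, XX, hXr⟩ := hX
  obtain ⟨hYh, YY, hYr⟩ := hY
  have hX0 : X ≠ 0 := by rintro rfl; simp at hXr
  have htr1 : ∀ {Z : Matrix (Fin (2*n)) (Fin (2*n)) 𝕜}, Z * Z = Z → Z.rank = 1 → Z.trace = 1 := by
    intro Z ZZ hZ
    have h := rank_one_sandwich hZ 1
    rw [mul_one, ZZ] at h
    have hne : Z ≠ 0 := by rintro rfl; simp at hZ
    exact smul_left_injective 𝕜 hne (by simpa using h.symm)
  -- `tr (X Y)` and `1 - tr (X Y)` are squared Frobenius norms, hence nonnegative reals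
  have hp : (X * Y).trace = ((Y * X)ᴴ * (Y * X)).trace := by
    rw [conjTranspose_mul, hXh.eq, hYh.eq, mul_assoc, ← mul_assoc Y, YY,
      ← mul_assoc, Matrix.trace_mul_comm (X * Y) X, ← mul_assoc, XX]
  have hq : 1 - (X * Y).trace = ((X - Y * X)ᴴ * (X - Y * X)).trace := by
    have : (X - Y * X)ᴴ * (X - Y * X) = X - X * Y * X := by
      rw [conjTranspose_sub, conjTranspose_mul, hXh.eq, hYh.eq]
      have : X * Y * (Y * X) = X * Y * X := by rw [mul_assoc, ← mul_assoc Y, YY, mul_assoc]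
      simp only [mul_sub, sub_mul, this, XX, mul_assoc]
      abel
    rw [this, trace_sub, htr1 XX hXr, rank_one_sandwich hXr, trace_smul, htr1 XX hXr]; simp
  have hp0 : 0 ≤ (X * Y).trace := hp ▸ (posSemidef_conjTranspose_mul_self _).trace_nonneg
  have hq0 : 0 ≤ 1 - (X * Y).trace := hq ▸ (posSemidef_conjTranspose_mul_self _).trace_nonneg
  obtain ⟨p, hpR⟩ : ∃ p : ℝ, (X * Y).trace = (p : 𝕜) :=
    ⟨_, ((RCLike.nonneg_iff_exists_ofReal.mp hp0).choose_spec.2).symm⟩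
  rw [hpR] at hp0 hq0
  have hp0' : 0 ≤ p := by exact_mod_cast hp0
  have hp1' : p ≤ 1 := by
    have : (0 : 𝕜) ≤ ((1 - p : ℝ) : 𝕜) := by push_cast; exact hq0
    have : 0 ≤ 1 - p := by exact_mod_cast this
    linarith
  have XYX : X * Y * X = p • X := by
    rw [rank_one_sandwich hXr, hpR, RCLike.real_smul_eq_coe_smul (K := 𝕜)]
  have YXY : Y * X * Y = p • Y := by
    rw [rank_one_sandwich hYr, Matrix.trace_mul_comm, hpR, RCLike.real_smul_eq_coe_smul (K := 𝕜)]
  -- `1 - p` is an eigenvalue of `(X - Y)²`, since `(X - Y)² X = (1 - p) X`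
  have hnorm : √(1 - p) ≤ opNorm (X - Y) := by
    have h : (X - Y) * ((X - Y) * X) = ((1 - p : ℝ) : 𝕜) • X := by
      rw [RCLike.real_smul_eq_coe_smul (K := 𝕜)] at XYX
      simp only [mul_sub, sub_mul, XX, ← mul_assoc, YY, XYX]
      push_cast
      module
    have h' := congrArg (fun M => ‖Matrix.toEuclideanCLM (n := Fin (2 * n)) (𝕜 := 𝕜) M‖) h
    simp only [map_mul, map_smul, norm_smul, RCLike.norm_ofReal] at h'
    rw [abs_of_nonneg (by linarith)] at h'
    have hpos : 0 < ‖Matrix.toEuclideanCLM (𝕜 := 𝕜) X‖ := by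
      rw [norm_pos_iff]
      exact (map_ne_zero_iff _ (EquivLike.injective _)).mpr hX0
    apply Real.sqrt_le_iff.mpr ⟨norm_nonneg _, ?_⟩
    refine le_of_mul_le_mul_right ?_ hpos
    rw [← h', pow_two, mul_assoc]
    exact (norm_mul_le _ _).trans (mul_le_mul_of_nonneg_left (norm_mul_le _ _) (norm_nonneg _))
  -- for orthogonal `X` and `Y` the rotation is not determined, but the bound is trivial
  rcases hp0'.eq_or_lt with h0 | h0
  · rw [← h0, sub_zero, Real.sqrt_one] at hnorm
    exact measureReal_le_one.trans hnorm
  rcases hp1'.eq_or_lt with h1 | h1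
  · have hXY : X = Y * X := by
      rw [hpR, h1, RCLike.ofReal_one, sub_self] at hq
      exact sub_eq_zero.mp (trace_conjTranspose_mul_self_eq_zero_iff.mp hq.symm)
    have hXY' : X = X * Y := by
      have := congrArg conjTranspose hXY
      rwa [conjTranspose_mul, hXh.eq, hYh.eq] at this
    have : X = Y := by
      rw [mul_assoc, ← hXY', ← hXY, h1, one_smul] at YXY
      exact YXY
    subst this
    simp [opNorm]
  obtain ⟨U, A, B, C, hU, hA, hB⟩ := exists_rotation h0 h1 hXh hYh XX YY XYX YXY
  have hθ0 := Real.arccos_nonneg √p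
  have hθ1 : Real.arccos √p ≤ Real.pi / 2 := Real.arccos_le_pi_div_two.mpr (Real.sqrt_nonneg p)
  calc _ ≤ 2 * Real.arccos √p / Real.pi := sep_trig_bound hinv (by positivity) hU hA hB
    _ = 2 / Real.pi * Real.arccos √p := by ring
    _ ≤ Real.sin (Real.arccos √p) := Real.mul_le_sin hθ0 hθ1
    _ = √(1 - p) := by rw [Real.sin_arccos, Real.sq_sqrt hp0']
    _ ≤ _ := hnorm

end
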